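/- Let R be a commutative Noetherian ring, let S be a finitely generated commutative R-algebra, and let M be a finitely generated S-module. Then the set of prime ideals 𝔮 of S such that the localization M_𝔮 is flat as an R-module (via the structure map R → S → S_𝔮) is an open subset of the prime spectrum Spec S with its Zariski topology. -/

import Mathlib

open TensorProduct

namespace FlatLocus

/-- Nagata-type criterion for openness in a Noetherian sober space. -/
theorem isOpen_of_nagata {X : Type*} [TopologicalSpace X] [TopologicalSpace.NoetherianSpace X]
    [QuasiSober X] (U : Set X) (h1 : StableUnderGeneralization U)
    (h2 : ∀ x ∈ U, ∃ O : Set X, IsOpen O ∧ x ∈ O ∧ O ∩ closure {x} ⊆ U) : IsOpen U := by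
  have key : ∀ Z : TopologicalSpace.Closeds X, IsClosed ((Z : Set X) \ U) := by
    intro Z
    induction Z using WellFoundedLT.induction with
    | ind Z ih =>
    by_cases hirr : IsIrreducible (Z : Set X)
    · obtain ⟨z, hz⟩ := QuasiSober.sober hirr Z.isClosed
      by_cases hzU : z ∈ U
      · obtain ⟨O, hO, hzO, hOU⟩ := h2 z hzU
        rw [hz.def] at hOU
        have hcl : IsClosed ((Z : Set X) \ O) := Z.isClosed.sdiff hO
        have hlt : (⟨(Z : Set X) \ O, hcl⟩ : TopologicalSpace.Closeds X) < Z := by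
          refine lt_of_le_of_ne (fun y hy => hy.1) (fun h => ?_)
          have hzZ : z ∈ Z := hz.mem
          rw [← h] at hzZ
          exact hzZ.2 hzO
        have := ih _ hlt
        convert! this using 1
        ext y
        simp only [Set.mem_sdiff, TopologicalSpace.Closeds.coe_mk]
        constructor
        · rintro ⟨a, b⟩
          exact ⟨⟨a, fun hy => b (hOU ⟨hy, a⟩)⟩, b⟩
        · rintro ⟨⟨a, _⟩, b⟩
          exact ⟨a, b⟩
      · have : (Z : Set X) \ U = Z := by
          rw [sdiff_eq_left, Set.disjoint_left]
          intro y hy hyU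
          exact hzU (h1 (hz.specializes hy) hyU)
        rw [this]
        exact Z.isClosed
    · by_cases hne : (Z : Set X).Nonempty
      · have hpre : ¬ IsPreirreducible (Z : Set X) := fun h => hirr ⟨hne, h⟩
        rw [isPreirreducible_iff_isClosed_union_isClosed] at hpre
        push Not at hpre
        obtain ⟨A, B, hA, hB, hsub, hnA, hnB⟩ := hpre
        have hl : ∀ C : Set X, ∀ hC : IsClosed C, ¬ (Z : Set X) ⊆ C →
            IsClosed (((Z : Set X) ∩ C) \ U) := by
          intro C hC hn
          refine ih ⟨(Z : Set X) ∩ C, Z.isClosed.inter hC⟩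
            (lt_of_le_of_ne (fun y hy => hy.1) (fun h => hn ?_))
          intro y hy
          have hy' : y ∈ Z := hy
          rw [← h] at hy'
          exact hy'.2
        have := (hl A hA hnA).union (hl B hB hnB)
        convert! this using 1
        ext y
        constructor
        · rintro ⟨a, b⟩
          rcases hsub a with h | h
          · exact Or.inl ⟨⟨a, h⟩, b⟩
          · exact Or.inr ⟨⟨a, h⟩, b⟩
        · rintro (⟨⟨a, _⟩, b⟩ | ⟨⟨a, _⟩, b⟩) <;> exact ⟨a, b⟩
      · rw [Set.not_nonempty_iff_eq_empty] at hne
        rw [hne]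
        simp
  have := key ⊤
  simpa [← Set.compl_eq_univ_sdiff] using this

theorem exists_smul_eq_zero_of_smul_mem {S T : Type*} [CommRing S] [AddCommGroup T] [Module S T]
    [Module.Finite S T] (q : Ideal S) [hq : q.IsPrime]
    (h : ∀ x : T, ∃ s ∉ q, s • x ∈ q • (⊤ : Submodule S T)) : ∃ s ∉ q, ∀ x : T, s • x = 0 := by
  obtain ⟨s, hs, hsx⟩ : ∃ s ∉ q, ∀ x : T, s • x ∈ q • (⊤ : Submodule S T) := by
    obtain ⟨G, hG⟩ := Module.Finite.fg_top (R := S) (M := T)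
    choose f hf hf' using h
    refine ⟨∏ g ∈ G, f g, ?_, ?_⟩
    · rw [Ideal.IsPrime.prod_mem_iff]
      push Not
      exact fun g _ => hf g
    · intro x
      have hx : x ∈ Submodule.span S (G : Set T) := by rw [hG]; trivial
      induction hx using Submodule.span_induction with
      | mem x hx =>
        obtain ⟨c, hc⟩ := Finset.dvd_prod_of_mem f hx
        rw [hc, mul_comm, mul_smul]
        exact Submodule.smul_mem _ _ (hf' x)
      | zero => simp
      | add x y _ _ hx hy => rw [smul_add]; exact Submodule.add_mem _ hx hy
      | smul a x _ hx => rw [smul_comm]; exact Submodule.smul_mem _ _ hx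
  obtain ⟨p, hp, -, hc, h0⟩ :=
    LinearMap.exists_monic_and_natDegree_eq_and_coeff_mem_pow_and_aeval_eq_zero S
      (algebraMap S (Module.End S T) s) q (by rintro _ ⟨x, rfl⟩; exact hsx x)
  refine ⟨p.eval s, ?_, fun x => ?_⟩
  · intro hmem
    have h1 : p.map (Ideal.Quotient.mk q) = Polynomial.X ^ p.natDegree := by
      ext k
      rw [Polynomial.coeff_map, Polynomial.coeff_X_pow]
      rcases lt_trichotomy k p.natDegree with hk | hk | hk
      · rw [if_neg hk.ne, Ideal.Quotient.eq_zero_iff_mem]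
        exact Ideal.pow_le_self (by omega) (hc k)
      · rw [if_pos hk, hk, hp.coeff_natDegree, map_one]
      · rw [if_neg hk.ne', Polynomial.coeff_eq_zero_of_natDegree_lt hk, map_zero]
    have h2 := congrArg (Polynomial.eval (Ideal.Quotient.mk q s)) h1
    rw [Polynomial.eval_map, Polynomial.eval₂_at_apply, Ideal.Quotient.eq_zero_iff_mem.2 hmem,
      Polynomial.eval_pow, Polynomial.eval_X, ← map_pow, eq_comm,
      Ideal.Quotient.eq_zero_iff_mem] at h2
    exact hs (hq.mem_of_pow_mem _ h2)
  · rw [Polynomial.aeval_algebraMap_apply] at h0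
    simpa using congrArg (fun f : Module.End S T => f x) h0

section
variable {R S : Type*} [CommRing R] [CommRing S] [Algebra R S]
  {M : Type*} [AddCommGroup M] [Module S M] [Module R M] [IsScalarTower R S M]

theorem lTensor_smul' {P Q : Type*} [AddCommGroup P] [Module R P] [AddCommGroup Q] [Module R Q]
    (f : P →ₗ[R] Q) (s : S) (x : M ⊗[R] P) :
    LinearMap.lTensor M f (s • x) = s • LinearMap.lTensor M f x :=
  (TensorProduct.AlgebraTensorModule.lTensor S M f).map_smul s x

variable (R M) in
/-- Elementwise flatness after localizing at `W`, for one ideal. -/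
def FlatAt (W : Submonoid S) (I : Ideal R) : Prop :=
  ∀ x : M ⊗[R] I, LinearMap.lTensor M I.subtype x = 0 → ∃ w ∈ W, w • x = 0

theorem flat_iff (W : Submonoid S) {M' : Type*} [AddCommGroup M'] [Module S M'] [Module R M']
    [IsScalarTower R S M'] (f : M →ₗ[S] M') [IsLocalizedModule W f] :
    Module.Flat R M' ↔ ∀ I : Ideal R, FlatAt R M W I := by
  rw [Module.Flat.iff_lTensor_injective']
  refine forall_congr' fun I => ?_
  let fI := AlgebraTensorModule.rTensor R I f
  let fR := AlgebraTensorModule.rTensor R R f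
  have comm : ∀ x, LinearMap.lTensor M' I.subtype (fI x) = fR (LinearMap.lTensor M I.subtype x) := by
    intro x
    induction x with
    | zero => simp
    | tmul a b => simp [fI, fR]
    | add x y hx hy => simp only [map_add, hx, hy]
  rw [injective_iff_map_eq_zero]
  constructor
  · intro h x hx
    have h1 : fI x = 0 := h _ (by rw [comm, hx, map_zero])
    obtain ⟨w, hw⟩ := (IsLocalizedModule.eq_zero_iff W fI).1 h1
    exact ⟨w, w.2, hw⟩
  · intro h y hy
    obtain ⟨⟨x, w⟩, hxw⟩ := IsLocalizedModule.surj W fI y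
    have h1 : fR (LinearMap.lTensor M I.subtype x) = 0 := by
      rw [← comm]
      simp only at hxw
      rw [← hxw, Submonoid.smul_def, lTensor_smul', hy, smul_zero]
    obtain ⟨w', hw'⟩ := (IsLocalizedModule.eq_zero_iff W fR).1 h1
    obtain ⟨w'', hw'', h3⟩ := h ((w' : S) • x) (by rw [lTensor_smul']; exact hw')
    have h4 : fI x = 0 :=
      (IsLocalizedModule.eq_zero_iff W fI).2 ⟨⟨w'', hw''⟩ * w', by
        rw [mul_smul]; exact h3⟩
    simp only at hxw
    rw [h4] at hxw
    exact IsLocalizedModule.smul_injective fI w (by simpa using hxw)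

theorem finite_tensor [Module.Finite S M] (P : Type*) [AddCommGroup P] [Module R P]
    [Module.Finite R P] : Module.Finite S (M ⊗[R] P) := by
  obtain ⟨n, g, hg⟩ := Module.Finite.exists_fin' R P
  have h1 : Module.Finite S (M ⊗[R] (Fin n → R)) :=
    Module.Finite.equiv (TensorProduct.piScalarRight R S M (Fin n)).symm
  exact Module.Finite.of_surjective (AlgebraTensorModule.lTensor S M g)
    (LinearMap.lTensor_surjective M hg)

/-- Inductive step of the local criterion. -/
theorem flatAt_step [IsNoetherianRing S] [IsNoetherianRing R] [Module.Finite S M]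
    (q : Ideal S) [hq : q.IsPrime] (I : Ideal R) (a : R) (ha : algebraMap R S a ∈ q)
    (haI : a ∉ I) (ih : ∀ J : Ideal R, I < J → FlatAt R M q.primeCompl J) :
    FlatAt R M q.primeCompl I := by
  let I' : Ideal R := I ⊔ Ideal.span {a}
  have hII' : I ≤ I' := le_sup_left
  have haI' : a ∈ I' := Ideal.mem_sup_right (Ideal.mem_span_singleton_self a)
  have hlt : I < I' := lt_of_le_of_ne hII' fun h => haI (h ▸ haI')
  let J : Ideal R := Submodule.comap (LinearMap.toSpanSingleton R R a) I
  have hIJ : I ≤ J := fun r hr => by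
    simpa [J] using I.mul_mem_right a hr
  let u : J →ₗ[R] I := -((LinearMap.toSpanSingleton R R a).restrict (p := J) (q := I)
    (fun r hr => hr))
  let α : J →ₗ[R] R × I := LinearMap.prod J.subtype u
  let β : R × I →ₗ[R] I' := LinearMap.coprod
    (LinearMap.toSpanSingleton R I' ⟨a, haI'⟩) (Submodule.inclusion hII')
  have hβ : Function.Surjective β := by
    rintro ⟨y, hy⟩
    obtain ⟨i, hi, z, hz, rfl⟩ := Submodule.mem_sup.1 hy
    obtain ⟨r, rfl⟩ := Ideal.mem_span_singleton'.1 hz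
    refine ⟨(r, ⟨i, hi⟩), Subtype.ext ?_⟩
    simp [β, add_comm]
  have hex : Function.Exact α β := by
    rintro ⟨r, i⟩
    constructor
    · intro h
      have h' : r * a + (i : R) = 0 := by simpa [β] using congrArg Subtype.val h
      have hr : r ∈ J := by
        have : r * a = -(i : R) := by linear_combination h'
        simp only [J, Submodule.mem_comap, LinearMap.toSpanSingleton_apply, smul_eq_mul, this]
        exact I.neg_mem i.2
      refine ⟨⟨r, hr⟩, Prod.ext rfl (Subtype.ext ?_)⟩
      simp [α, u]
      linear_combination -h'
    · rintro ⟨r', h⟩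
      rw [← h]
      apply Subtype.ext
      simp [α, β, u]
  -- key
  have key : ∀ x : M ⊗[R] I, LinearMap.lTensor M I.subtype x = 0 → ∃ s ∈ q.primeCompl,
      ∃ w : M ⊗[R] J, LinearMap.lTensor M J.subtype w = 0 ∧ LinearMap.lTensor M u w = s • x := by
    intro x hx
    obtain ⟨s, hs, hsx⟩ := ih I' hlt (LinearMap.lTensor M (Submodule.inclusion hII') x) (by
      rw [← LinearMap.lTensor_comp_apply]; exact hx)
    rw [← lTensor_smul'] at hsx
    obtain ⟨w, hw⟩ := (lTensor_exact M hex hβ (LinearMap.lTensor M (LinearMap.inr R R I) (s • x))).1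
      (by rw [← LinearMap.lTensor_comp_apply]; simpa [β] using hsx)
    refine ⟨s, hs, w, ?_, ?_⟩
    · have := congrArg (LinearMap.lTensor M (LinearMap.fst R R I)) hw
      rw [← LinearMap.lTensor_comp_apply, ← LinearMap.lTensor_comp_apply] at this
      simpa [α] using this
    · have := congrArg (LinearMap.lTensor M (LinearMap.snd R R I)) hw
      rw [← LinearMap.lTensor_comp_apply, ← LinearMap.lTensor_comp_apply] at this
      simpa [α] using this
  by_cases hJ : J ≤ I
  · let T : Submodule S (M ⊗[R] I) := LinearMap.ker (AlgebraTensorModule.lTensor S M I.subtype)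
    have : Module.Finite S (M ⊗[R] I) := finite_tensor I
    have : Module.Finite S T := inferInstance
    obtain ⟨s, hs, h⟩ := exists_smul_eq_zero_of_smul_mem (T := T) q (by
      rintro ⟨x, hx⟩
      obtain ⟨s, hs, w, hw, hws⟩ := key x hx
      let w' := LinearMap.lTensor M (Submodule.inclusion hJ) w
      have hw' : w' ∈ T := by
        change LinearMap.lTensor M I.subtype w' = 0
        rw [← LinearMap.lTensor_comp_apply]; exact hw
      refine ⟨s, hs, ?_⟩
      have hu : u = (-a) • Submodule.inclusion hJ := by
        ext r; simp [u, mul_comm]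
      have : s • (⟨x, hx⟩ : T) = (-algebraMap R S a) • (⟨w', hw'⟩ : T) := by
        apply Subtype.ext
        change s • x = (-algebraMap R S a) • w'
        rw [← hws, hu, LinearMap.lTensor_smul, LinearMap.smul_apply, ← map_neg, algebraMap_smul]
      rw [this]
      exact Submodule.smul_mem_smul (q.neg_mem ha) trivial)
    intro x hx
    exact ⟨s, hs, congrArg Subtype.val (h ⟨x, hx⟩)⟩
  · intro x hx
    obtain ⟨s, hs, w, hw, hws⟩ := key x hx
    obtain ⟨t, ht, htw⟩ := ih J (lt_of_le_not_ge hIJ hJ) w hw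
    refine ⟨t * s, mul_mem ht hs, ?_⟩
    rw [mul_smul, ← hws, ← lTensor_smul', htw, map_zero]

/-- Local criterion of flatness. -/
theorem flatAt_of_le [IsNoetherianRing S] [IsNoetherianRing R] [Module.Finite S M]
    (q : Ideal S) [hq : q.IsPrime] (p : Ideal R) (hp : p ≤ q.comap (algebraMap R S))
    (h : ∀ I : Ideal R, p ≤ I → FlatAt R M q.primeCompl I) (I : Ideal R) :
    FlatAt R M q.primeCompl I := by
  induction I using WellFoundedGT.induction with
  | ind I ih =>
  by_cases hI : p ≤ I
  · exact h I hI
  · obtain ⟨a, ha, haI⟩ := Set.not_subset.1 hI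
    exact flatAt_step q I a (hp ha) haI ih
end


section
variable {A : Type*} [CommRing A]

/-- Elementwise version of `N_a` is flat over `A`. -/
def G (a : A) (N : Type*) [AddCommGroup N] [Module A N] : Prop :=
  ∀ I : Ideal A, ∀ x : N ⊗[A] I, LinearMap.lTensor N I.subtype x = 0 → ∃ n : ℕ, a ^ n • x = 0

variable {N N' N'' : Type*} [AddCommGroup N] [Module A N] [AddCommGroup N'] [Module A N']
  [AddCommGroup N''] [Module A N'']

theorem G.of_dvd {a b : A} (h : G a N) (hab : a ∣ b) : G b N := by
  intro I x hx
  obtain ⟨n, hn⟩ := h I x hx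
  obtain ⟨c, hc⟩ := pow_dvd_pow_of_dvd hab n
  exact ⟨n, by rw [hc, mul_comm, mul_smul, hn, smul_zero]⟩

theorem tensor_ring_inj {f : N' →ₗ[A] N} (hf : Function.Injective f) :
    Function.Injective (LinearMap.rTensor A f) :=
  Module.Flat.rTensor_preserves_injective_linearMap f hf

theorem sub_comm (f : N' →ₗ[A] N) (I : Ideal A) (x : N' ⊗[A] I) :
    LinearMap.lTensor N I.subtype (LinearMap.rTensor I f x) =
      LinearMap.rTensor A f (LinearMap.lTensor N' I.subtype x) := by
  rw [← LinearMap.comp_apply, ← LinearMap.comp_apply, LinearMap.lTensor_comp_rTensor,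
    LinearMap.rTensor_comp_lTensor]

theorem G.ext {a : A} {f : N' →ₗ[A] N} {g : N →ₗ[A] N''} (hf : Function.Injective f)
    (hfg : Function.Exact f g) (hg : Function.Surjective g) (h' : G a N') (h'' : G a N'') :
    G a N := by
  intro I x hx
  obtain ⟨n, hn⟩ := h'' I (LinearMap.rTensor I g x) (by rw [sub_comm, hx, map_zero])
  rw [← map_smul] at hn
  obtain ⟨y, hy⟩ := (rTensor_exact I hfg hg _).1 hn
  obtain ⟨m, hm⟩ := h' I y (by
    apply tensor_ring_inj hf
    rw [← sub_comm, hy, map_smul, hx, smul_zero, map_zero])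
  refine ⟨m + n, ?_⟩
  rw [pow_add, mul_smul, ← hy, ← map_smul, hm, map_zero]

theorem G.equiv {a : A} (e : N' ≃ₗ[A] N) (h : G a N') : G a N := by
  intro I x hx
  obtain ⟨y, rfl⟩ := (LinearEquiv.rTensor I e).surjective x
  obtain ⟨n, hn⟩ := h I y (by
    apply tensor_ring_inj e.injective
    rw [← sub_comm, map_zero]
    exact hx)
  exact ⟨n, by rw [← map_smul, hn, map_zero]⟩

theorem G.of_subsingleton (a : A) [Subsingleton N] : G a N := fun _ _ _ => ⟨0, Subsingleton.elim _ _⟩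

theorem G.iSup {a : A} (F : ℕ → Submodule A N) (hF : Monotone F) (hs : ∀ x, ∃ i, x ∈ F i)
    (h : ∀ i, G a (F i)) : G a N := by
  intro I x hx
  obtain ⟨i, y, hy⟩ : ∃ i, ∃ y : F i ⊗[A] I, LinearMap.rTensor I (F i).subtype y = x := by
    clear hx
    induction x with
    | zero => exact ⟨0, 0, by simp⟩
    | tmul m r =>
      obtain ⟨i, hi⟩ := hs m
      exact ⟨i, ⟨m, hi⟩ ⊗ₜ r, by simp⟩
    | add x y hx hy =>
      obtain ⟨i, x, rfl⟩ := hx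
      obtain ⟨j, y, rfl⟩ := hy
      have hi : F i ≤ F (max i j) := hF (le_max_left _ _)
      have hj : F j ≤ F (max i j) := hF (le_max_right _ _)
      refine ⟨max i j, LinearMap.rTensor I (Submodule.inclusion hi) x +
        LinearMap.rTensor I (Submodule.inclusion hj) y, ?_⟩
      rw [map_add, ← LinearMap.rTensor_comp_apply, ← LinearMap.rTensor_comp_apply]
      rfl
  obtain ⟨n, hn⟩ := h i I y (by
    apply tensor_ring_inj (F i).injective_subtype
    rw [← sub_comm, hy, hx, map_zero])
  exact ⟨n, by rw [← hy, ← map_smul, hn, map_zero]⟩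

end

universe u v w

/-- Generic flatness holds for all finite `B`-modules. -/
def GF (A : Type u) (B : Type v) [CommRing A] [CommRing B] [Algebra A B] : Prop :=
  ∀ (N : Type w) [AddCommGroup N] [Module B N] [Module A N] [IsScalarTower A B N]
    [Module.Finite B N], ∃ a : A, a ≠ 0 ∧ G a N

theorem GF.of_surjective {A : Type u} {B B' : Type*} [CommRing A] [CommRing B] [Algebra A B]
    [CommRing B'] [Algebra A B'] (f : B →ₐ[A] B') (hf : Function.Surjective f)
    (h : GF.{_, _, w} A B) : GF.{_, _, w} A B' := by
  intro N _ _ _ _ _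
  let : Module B N := Module.compHom N f.toRingHom
  let : Algebra B B' := f.toRingHom.toAlgebra
  have : IsScalarTower B B' N := ⟨fun b b' n => by
    change (f b * b') • n = f b • b' • n
    rw [mul_smul]⟩
  have : IsScalarTower A B N := ⟨fun a b n => by
    change f (a • b) • n = a • f b • n
    rw [map_smul, smul_assoc]⟩
  have : Module.Finite B B' := Module.Finite.of_surjective (Algebra.linearMap B B') hf
  have : Module.Finite B N := Module.Finite.trans B' N
  exact h N

theorem G.chain {A : Type u} {B : Type v} [CommRing A] [CommRing B] [Algebra A B]
    {N : Type w} [AddCommGroup N] [Module A N] [Module B N] [IsScalarTower A B N] {a : A}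
    (F : ℕ → Submodule B N) (hmono : Monotone F) (h0 : F 0 = ⊥) (hall : ∀ x, ∃ i, x ∈ F i)
    (hG : ∀ i, G a (F (i + 1) ⧸ (F i).submoduleOf (F (i + 1)))) : G a N := by
  have hF : ∀ i, G a (F i) := by
    intro i
    induction i with
    | zero =>
      have : Subsingleton (F 0) := by
        rw [h0]; infer_instance
      exact G.of_subsingleton a
    | succ i ih =>
      let Q := (F i).submoduleOf (F (i + 1))
      let f : F i →ₗ[B] F (i + 1) := Submodule.inclusion (hmono i.le_succ)
      have hf : Function.Injective f := Submodule.inclusion_injective _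
      have hg : Function.Surjective Q.mkQ := Submodule.mkQ_surjective _
      have hfg : Function.Exact f Q.mkQ := by
        intro y
        rw [Submodule.mkQ_apply, Submodule.Quotient.mk_eq_zero]
        constructor
        · intro hy
          exact ⟨⟨y, hy⟩, rfl⟩
        · rintro ⟨z, rfl⟩
          exact z.2
      exact G.ext (f := f.restrictScalars A) (g := Q.mkQ.restrictScalars A) hf hfg hg ih (hG i)
  exact G.iSup (fun i => (F i).restrictScalars A) hmono hall hF

theorem GF.polynomial {A : Type u} {B : Type v} [CommRing A] [IsDomain A] [CommRing B]
    [IsNoetherianRing B] [Algebra A B]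
    (h : GF.{_, _, w} A B) : GF.{_, _, w} A (Polynomial B) := by
  intro N _ _ _ _ _
  let : Module B N := Module.compHom N (Polynomial.C : B →+* Polynomial B)
  have : IsScalarTower B (Polynomial B) N := ⟨fun b b' n => by
    change (b • b') • n = (Polynomial.C b) • b' • n
    rw [← mul_smul, Polynomial.smul_eq_C_mul]⟩
  have : IsScalarTower A B N := ⟨fun a b n => by
    change (Polynomial.C (a • b)) • n = a • (Polynomial.C b) • n
    rw [← smul_assoc, Polynomial.smul_C]⟩
  obtain ⟨r, φ, hφ⟩ := Module.Finite.exists_fin' (Polynomial B) N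
  let P := Fin r → B
  let ψ : P →ₗ[B] N := (φ.restrictScalars B) ∘ₗ
    (LinearMap.pi fun i => (Algebra.linearMap B (Polynomial B)) ∘ₗ LinearMap.proj i)
  let X : N →ₗ[B] N := 
    ((LinearMap.lsmul (Polynomial B) N) Polynomial.X).restrictScalars B
  let F : ℕ → Submodule B N := fun i => ⨆ j : Fin i, LinearMap.range ((X ^ (j : ℕ)) ∘ₗ ψ)
  have hFs : ∀ i, F (i + 1) = F i ⊔ LinearMap.range ((X ^ i) ∘ₗ ψ) := by
    intro i
    apply le_antisymm
    · refine iSup_le fun j => ?_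
      rcases Nat.lt_succ_iff_lt_or_eq.1 j.2 with hj | hj
      · exact le_sup_of_le_left (le_iSup (fun j : Fin i => LinearMap.range ((X ^ (j : ℕ)) ∘ₗ ψ)) ⟨j, hj⟩)
      · rw [hj]; exact le_sup_right
    · refine sup_le (iSup_le fun j => ?_) ?_
      · exact le_iSup (fun j : Fin (i + 1) => LinearMap.range ((X ^ (j : ℕ)) ∘ₗ ψ)) j.castSucc
      · exact le_iSup (fun j : Fin (i + 1) => LinearMap.range ((X ^ (j : ℕ)) ∘ₗ ψ)) (Fin.last i)
  have hmono : Monotone F := monotone_nat_of_le_succ fun i => by rw [hFs]; exact le_sup_left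
  have hX : ∀ i, ∀ x ∈ F i, X x ∈ F (i + 1) := by
    intro i
    change F i ≤ (F (i + 1)).comap X
    refine iSup_le fun j => ?_
    rintro _ ⟨v, rfl⟩
    refine Submodule.mem_iSup_of_mem j.succ ⟨v, ?_⟩
    simp [pow_succ']
  have hall : ∀ x, ∃ i, x ∈ F i := by
    have hdir : Directed (· ≤ ·) F := hmono.directed_le
    suffices ⨆ i, F i = ⊤ by
      intro x
      exact (Submodule.mem_iSup_of_directed F hdir).1 (this ▸ Submodule.mem_top)
    rw [eq_top_iff]
    rintro x -
    obtain ⟨y, rfl⟩ := hφ x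
    have hXt : ∀ z ∈ ⨆ i, F i, X z ∈ ⨆ i, F i := by
      intro z hz
      obtain ⟨i, hi⟩ := (Submodule.mem_iSup_of_directed F hdir).1 hz
      exact Submodule.mem_iSup_of_mem (i + 1) (hX i z hi)
    have hmul : ∀ p : Polynomial B, ∀ z ∈ ⨆ i, F i, p • z ∈ ⨆ i, F i := by
      intro p z hz
      induction p using Polynomial.induction_on' with
      | add p q hp hq => rw [add_smul]; exact Submodule.add_mem _ hp hq
      | monomial n b =>
        rw [← Polynomial.C_mul_X_pow_eq_monomial, mul_smul]
        refine Submodule.smul_mem (⨆ i, F i) b ?_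
        induction n with
        | zero => simpa using hz
        | succ n ih => rw [pow_succ', mul_smul]; exact hXt _ ih
    rw [pi_eq_sum_univ y, map_sum]
    refine Submodule.sum_mem _ fun i _ => ?_
    rw [map_smul]
    apply hmul
    refine Submodule.mem_iSup_of_mem 1 (Submodule.mem_iSup_of_mem 0 ⟨Pi.single i 1, ?_⟩)
    simp only [ψ, Fin.val_zero, pow_zero, LinearMap.comp_apply, Module.End.one_apply,
      LinearMap.restrictScalars_apply]
    congr 1
    ext j : 1
    by_cases hij : i = j
    · subst hij
      change Polynomial.C ((Pi.single i 1 : Fin r → B) i) = _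
      simp
    · change Polynomial.C ((Pi.single i 1 : Fin r → B) j) = _
      simp [hij, Ne.symm hij]
  let L : ℕ →o Submodule B P := ⟨fun i => (F i).comap ((X ^ i) ∘ₗ ψ), monotone_nat_of_le_succ fun i v hv => by
    have := hX i _ hv
    simpa [pow_succ'] using this⟩
  obtain ⟨n, hn⟩ := WellFoundedGT.monotone_chain_condition L
  have hE : ∀ i, Nonempty ((P ⧸ L i) ≃ₗ[B] (F (i + 1) ⧸ (F i).submoduleOf (F (i + 1)))) := by
    intro i
    have hmem : ∀ v, ((X ^ i) ∘ₗ ψ) v ∈ F (i + 1) := fun v => by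
      rw [hFs]
      exact Submodule.mem_sup_right ⟨v, rfl⟩
    let θ : P →ₗ[B] F (i + 1) ⧸ (F i).submoduleOf (F (i + 1)) :=
      ((F i).submoduleOf (F (i + 1))).mkQ ∘ₗ ((X ^ i) ∘ₗ ψ).codRestrict (F (i + 1)) hmem
    have hθ : Function.Surjective θ := by
      intro y
      obtain ⟨⟨y, hy⟩, rfl⟩ := Submodule.mkQ_surjective _ y
      have hy' := hy
      rw [hFs] at hy'
      obtain ⟨z, hz, _, ⟨v, rfl⟩, hzv⟩ := Submodule.mem_sup.1 hy'
      refine ⟨v, ?_⟩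
      simp only [θ, LinearMap.comp_apply, Submodule.mkQ_apply]
      rw [Submodule.Quotient.eq]
      have : ((X ^ i) ∘ₗ ψ) v - y = -z := by rw [← hzv]; abel
      change ((X ^ i) ∘ₗ ψ) v - y ∈ F i
      rw [this]
      exact (F i).neg_mem hz
    have hker : L i = LinearMap.ker θ := by
      ext v
      rw [LinearMap.mem_ker]
      change _ ↔ ((F i).submoduleOf (F (i + 1))).mkQ _ = 0
      rw [Submodule.mkQ_apply, Submodule.Quotient.mk_eq_zero]
      rfl
    exact ⟨Submodule.quotEquivOfEq _ _ hker ≪≫ₗ θ.quotKerEquivOfSurjective hθ⟩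
  have E := fun i => (hE i).some
  have hQ : ∀ i, ∃ a : A, a ≠ 0 ∧ G a (F (i + 1) ⧸ (F i).submoduleOf (F (i + 1))) ∧
      ∀ j, L j = L i → G a (F (j + 1) ⧸ (F j).submoduleOf (F (j + 1))) := by
    intro i
    have : Module.Finite B (F (i + 1) ⧸ (F i).submoduleOf (F (i + 1))) :=
      Module.Finite.equiv (E i)
    obtain ⟨a, ha, haG⟩ := h (F (i + 1) ⧸ (F i).submoduleOf (F (i + 1)))
    refine ⟨a, ha, haG, fun j hj => ?_⟩
    exact haG.equiv (((E i).symm ≪≫ₗ Submodule.quotEquivOfEq _ _ hj.symm ≪≫ₗ E j).restrictScalars A)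
  choose a ha0 ha1 ha2 using hQ
  refine ⟨∏ i ∈ Finset.range (n + 1), a i, Finset.prod_ne_zero_iff.2 fun i _ => ha0 i, ?_⟩
  have hG : ∀ i, G (∏ i ∈ Finset.range (n + 1), a i)
      (F (i + 1) ⧸ (F i).submoduleOf (F (i + 1))) := by
    intro i
    by_cases hi : i ≤ n
    · exact (ha1 i).of_dvd (Finset.dvd_prod_of_mem a (by simp; omega))
    · exact (ha2 n i (hn i (by omega)).symm).of_dvd (Finset.dvd_prod_of_mem a (by simp))
  exact G.chain F hmono (iSup_of_empty _) hall hG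

theorem exists_G_of_finite {A : Type u} [CommRing A] [IsDomain A] [IsNoetherianRing A]
    {N : Type w} [AddCommGroup N] [Module A N] [Module.Finite A N] :
    ∃ a : A, a ≠ 0 ∧ G a N := by
  have : Module.FinitePresentation A N := Module.finitePresentation_of_finite A N
  let M' := LocalizedModule (nonZeroDivisors A) N
  have hfree : Module.Free (FractionRing A) M' := inferInstance
  obtain ⟨r, hr, hf, -⟩ := Module.FinitePresentation.exists_free_localizedModule_powers
    (nonZeroDivisors A) (LocalizedModule.mkLinearMap (nonZeroDivisors A) N) (FractionRing A)
  refine ⟨r, nonZeroDivisors.ne_zero hr, ?_⟩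
  have h1 : Module.Flat (Localization (Submonoid.powers r)) (LocalizedModule.Away r N) :=
    inferInstance
  have h2 : Module.Flat A (Localization (Submonoid.powers r)) := inferInstance
  have h3 : Module.Flat A (LocalizedModule.Away r N) :=
    Module.Flat.trans A (Localization (Submonoid.powers r)) _
  have h4 := (flat_iff (R := A) (S := A) (Submonoid.powers r)
    (LocalizedModule.mkLinearMap (Submonoid.powers r) N)).1 h3
  intro I x hx
  obtain ⟨_, ⟨n, rfl⟩, hn⟩ := h4 I x hx
  exact ⟨n, hn⟩

theorem GF.self {A : Type u} [CommRing A] [IsDomain A] [IsNoetherianRing A] :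
    GF.{_, _, w} A A := by
  intro N _ inst1 inst2 hT _
  have : inst1 = inst2 := by
    refine Module.ext' _ _ fun a n => ?_
    have := hT.smul_assoc a 1 n
    rw [smul_eq_mul, mul_one] at this
    rw [this]
    congr 1
    exact @one_smul A N _ inst1.toMulAction n
  subst this
  exact exists_G_of_finite

theorem GF.mvPolynomial {A : Type u} [CommRing A] [IsDomain A] [IsNoetherianRing A] (n : ℕ) :
    GF.{_, _, w} A (MvPolynomial (Fin n) A) := by
  induction n with
  | zero =>
    exact GF.self.of_surjective (MvPolynomial.isEmptyAlgEquiv A (Fin 0)).symm.toAlgHom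
      (MvPolynomial.isEmptyAlgEquiv A (Fin 0)).symm.surjective
  | succ n ih =>
    exact (GF.polynomial ih).of_surjective (MvPolynomial.finSuccEquiv A n).symm.toAlgHom
      (MvPolynomial.finSuccEquiv A n).symm.surjective

theorem GF.of_finiteType {A : Type u} {B : Type v} [CommRing A] [IsDomain A] [IsNoetherianRing A]
    [CommRing B] [Algebra A B] [Algebra.FiniteType A B] : GF.{_, _, w} A B := by
  obtain ⟨n, f, hf⟩ := Algebra.FiniteType.iff_quotient_mvPolynomial''.mp
    (inferInstance : Algebra.FiniteType A B)
  exact (GF.mvPolynomial n).of_surjective f hf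

section
attribute [local instance] Algebra.TensorProduct.rightAlgebra

theorem exists_generic {R S : Type*} [CommRing R] [IsNoetherianRing R] [CommRing S] [Algebra R S]
    [Algebra.FiniteType R S] (M : Type*) [AddCommGroup M] [Module S M] [Module R M]
    [IsScalarTower R S M] [Module.Finite S M] (p : Ideal R) [hp : p.IsPrime] :
    ∃ a ∉ p, ∀ (I : Ideal R) (hI : p ≤ I) (x : M ⊗[R] I), LinearMap.lTensor M I.subtype x = 0 →
      ∃ (n : ℕ) (y : M ⊗[R] p),
        LinearMap.lTensor M (Submodule.inclusion hI) y = a ^ n • x := by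
  obtain ⟨a, ha0, haG⟩ := GF.of_finiteType (A := R ⧸ p) (B := (R ⧸ p) ⊗[R] S)
    (((R ⧸ p) ⊗[R] S) ⊗[S] M)
  have hG : G a ((R ⧸ p) ⊗[R] M) := by
    exact haG.equiv (Algebra.IsPushout.cancelBaseChange R (R ⧸ p) S ((R ⧸ p) ⊗[R] S) M)
  obtain ⟨a, rfl⟩ := Ideal.Quotient.mk_surjective a
  refine ⟨a, fun h => ha0 (Ideal.Quotient.eq_zero_iff_mem.2 h), fun I hI x hx => ?_⟩
  let V : Ideal (R ⧸ p) := I.map (Ideal.Quotient.mk p)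
  let π : I →ₗ[R] V := LinearMap.codRestrict (V.restrictScalars R)
    ((Algebra.linearMap R (R ⧸ p)) ∘ₗ I.subtype) (fun i => Ideal.mem_map_of_mem _ i.2)
  have hπ : Function.Surjective π := by
    rintro ⟨v, hv⟩
    obtain ⟨i, hi, rfl⟩ := (Ideal.mem_map_iff_of_surjective _ Ideal.Quotient.mk_surjective).1 hv
    exact ⟨⟨i, hi⟩, rfl⟩
  have hex : Function.Exact (Submodule.inclusion hI) π := by
    intro i
    constructor
    · intro h
      have h' : Ideal.Quotient.mk p (i : R) = 0 := congrArg Subtype.val h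
      exact ⟨⟨i, Ideal.Quotient.eq_zero_iff_mem.1 h'⟩, rfl⟩
    · rintro ⟨y, rfl⟩
      exact Subtype.ext (Ideal.Quotient.eq_zero_iff_mem.2 y.2)
  let e : V ⊗[R] M ≃ₗ[R ⧸ p] ((R ⧸ p) ⊗[R] M) ⊗[R ⧸ p] V :=
    (AlgebraTensorModule.cancelBaseChange R (R ⧸ p) (R ⧸ p) V M).symm ≪≫ₗ
      TensorProduct.comm (R ⧸ p) _ _
  let e' : (R ⧸ p) ⊗[R] M ≃ₗ[R ⧸ p] ((R ⧸ p) ⊗[R] M) ⊗[R ⧸ p] (R ⧸ p) :=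
    (AlgebraTensorModule.cancelBaseChange R (R ⧸ p) (R ⧸ p) (R ⧸ p) M).symm ≪≫ₗ
      TensorProduct.comm (R ⧸ p) _ _
  let j : V →ₗ[R] (R ⧸ p) := V.subtype.restrictScalars R
  have hnat : ∀ z : V ⊗[R] M, LinearMap.lTensor ((R ⧸ p) ⊗[R] M) V.subtype (e z) =
      e' (LinearMap.rTensor M j z) := by
    intro z
    induction z with
    | zero => simp
    | tmul v m => simp [e, e', j]
    | add x y hx hy => simp only [map_add, hx, hy]
  let z : V ⊗[R] M := TensorProduct.comm R M V (LinearMap.lTensor M π x)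
  have hz : LinearMap.rTensor M j z = TensorProduct.comm R M (R ⧸ p)
      (LinearMap.lTensor M (Algebra.linearMap R (R ⧸ p)) (LinearMap.lTensor M I.subtype x)) := by
    clear hx
    induction x with
    | zero => simp [z]
    | tmul m i => rfl
    | add x y hx hy => simp only [z, map_add] at hx hy ⊢; rw [hx, hy]
  obtain ⟨n, hn⟩ := hG V (e z) (by rw [hnat, hz, hx]; simp)
  have hn' : a ^ n • z = 0 := by
    rw [← map_smul] at hn
    have := e.map_eq_zero_iff.1 hn
    rw [← map_pow] at this
    rw [← this]
    exact (algebraMap_smul (R ⧸ p) (a ^ n) z).symm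
  rw [← map_smul] at hn'
  have hn'' := (TensorProduct.comm R M V).map_eq_zero_iff.1 hn'
  rw [← map_smul] at hn''
  obtain ⟨y, hy⟩ := (lTensor_exact M hex hπ _).1 hn''
  exact ⟨n, y, hy⟩

end

theorem main_aux {R S : Type*} [CommRing R] [IsNoetherianRing R] [CommRing S] [Algebra R S]
    [Algebra.FiniteType R S] (M : Type*) [AddCommGroup M] [Module S M] [Module R M]
    [IsScalarTower R S M] [Module.Finite S M] :
    IsOpen {q : PrimeSpectrum S | ∀ I : Ideal R, FlatAt R M q.asIdeal.primeCompl I} := by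
  have hS : IsNoetherianRing S := Algebra.FiniteType.isNoetherianRing R S
  apply isOpen_of_nagata
  · intro q q' hqq' hq I x hx
    obtain ⟨w, hw, h⟩ := hq I x hx
    have hle : q'.asIdeal ≤ q.asIdeal := (PrimeSpectrum.le_iff_specializes q' q).2 hqq'
    exact ⟨w, fun hw' => hw (hle hw'), h⟩
  · intro q hq
    let p : Ideal R := q.asIdeal.comap (algebraMap R S)
    obtain ⟨a, ha, hgen⟩ := exists_generic (S := S) M p
    let T : Submodule S (M ⊗[R] p) := LinearMap.ker (AlgebraTensorModule.lTensor S M p.subtype)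
    have : Module.Finite S (M ⊗[R] p) := finite_tensor p
    have : Module.Finite S T := inferInstance
    obtain ⟨s, hs, hsT⟩ := exists_smul_eq_zero_of_smul_mem (T := T) q.asIdeal (by
      rintro ⟨x, hx⟩
      obtain ⟨w, hw, h⟩ := hq p x hx
      refine ⟨w, hw, ?_⟩
      have : w • (⟨x, hx⟩ : T) = 0 := Subtype.ext h
      rw [this]
      exact Submodule.zero_mem _)
    refine ⟨PrimeSpectrum.basicOpen (algebraMap R S a * s),
      (PrimeSpectrum.basicOpen _).isOpen, ?_, ?_⟩
    · exact q.isPrime.mul_notMem ha hs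
    · rintro q' ⟨hq'1, hq'2⟩ I
      have hle : q.asIdeal ≤ q'.asIdeal :=
        (PrimeSpectrum.le_iff_specializes q q').2 (specializes_iff_mem_closure.2 hq'2)
      have ha' : algebraMap R S a ∉ q'.asIdeal := fun h => hq'1 (Ideal.mul_mem_right _ _ h)
      have hs' : s ∉ q'.asIdeal := fun h => hq'1 (Ideal.mul_mem_left _ _ h)
      refine flatAt_of_le q'.asIdeal p (Ideal.comap_mono hle) (fun I hI x hx => ?_) I
      obtain ⟨n, y, hy⟩ := hgen I hI x hx
      have hyT : y ∈ T := by
        change LinearMap.lTensor M p.subtype y = 0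
        have : p.subtype = I.subtype ∘ₗ Submodule.inclusion hI := rfl
        rw [this, LinearMap.lTensor_comp_apply, hy, map_smul, hx, smul_zero]
      have hsy : s • y = 0 := congrArg Subtype.val (hsT ⟨y, hyT⟩)
      refine ⟨s * algebraMap R S a ^ n, mul_mem (S := Submonoid S) hs' (pow_mem ha' n), ?_⟩
      rw [mul_smul, ← map_pow, algebraMap_smul, ← hy, ← lTensor_smul', hsy, map_zero]

end FlatLocus

/-- **Openness of the flat locus** (commutative-algebra content of Lemma 2.3(1)(i)):
if `R` is a commutative Noetherian ring, `S` a finitely generated commutative `R`-algebra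
and `M` a finitely generated `S`-module, then the set of primes `𝔮` of `S` such that the
localization `M_𝔮` is flat as an `R`-module (via `R → S → S_𝔮`) is open in `Spec S`. -/
theorem flatLocus_isOpen (R S : Type*) [CommRing R] [IsNoetherianRing R]
    [CommRing S] [Algebra R S] [Algebra.FiniteType R S]
    (M : Type*) [AddCommGroup M] [Module S M] [Module.Finite S M] :
    IsOpen {q : PrimeSpectrum S |
      Module.Flat R (RestrictScalars R S (LocalizedModule q.asIdeal.primeCompl M))} := by
  let : Module R M := Module.compHom M (algebraMap R S)
  have : IsScalarTower R S M := IsScalarTower.of_algebraMap_smul fun r m => rfl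
  convert! FlatLocus.main_aux (R := R) (S := S) M using 1
  ext q
  have : IsScalarTower R S (LocalizedModule q.asIdeal.primeCompl M) := inferInstance
  let e : RestrictScalars R S (LocalizedModule q.asIdeal.primeCompl M) ≃ₗ[R]
      LocalizedModule q.asIdeal.primeCompl M :=
    { RestrictScalars.addEquiv R S (LocalizedModule q.asIdeal.primeCompl M) with
      map_smul' := fun r x => algebraMap_smul S r
        (RestrictScalars.addEquiv R S (LocalizedModule q.asIdeal.primeCompl M) x) }
  exact (Module.Flat.equiv_iff e).trans (FlatLocus.flat_iff q.asIdeal.primeCompl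
    (LocalizedModule.mkLinearMap q.asIdeal.primeCompl M))
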